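/- arXiv:math/0308016 — 2 statements merged into one kernel-verified Lean document; each statement's English description precedes it below -/
import Mathlib

section
/- For every λ ∈ K: the kernel of the even part of D(−1) is 3-dimensional, spanned by E1, E3 and mE4 − E5; and the kernel of the odd part of D(−1) is spanned by O2, together with O1 exactly when λ = −(m+1), and together with O3 exactly when λ = −1. In particular, if λ is not a negative integer, the cohomology H¹(d_λ) has dimension 3 in the even part and 1 in the odd part. -/
namespace LinfCohomology

variable {K : Type*} [Field K] [CharZero K]

/- Cochain conventions: for `n ≥ 0`, the even part of `C(n)` has coordinates
`E1,…,E6` (for `φ^{1,0,n+1}_1, φ^{1,0,n+1}_2, φ^{0,1,n+1}_1, φ^{0,1,n+1}_2,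
φ^{0,0,n+2}_3, φ^{1,1,n}_3`) and the odd part has coordinates `O1,…,O6` (for
`ψ^{1,0,n+1}_3, ψ^{0,1,n+1}_3, ψ^{0,0,n+2}_1, ψ^{0,0,n+2}_2, ψ^{1,1,n}_1,
ψ^{1,1,n}_2`); `C(-1)` has even coordinates `E1,…,E5` and odd `O1,…,O4`. -/

/-- The even part of the coboundary operator `D(n)` of
`d_λ = ψ^{0,1,m+1}_3 + λψ^{1,1,m}_1`, for `n ≥ 0`:
`E1 ↦ -(n+1)O5`, `E2 ↦ -O1+(λ-n-1)O6`, `E3 ↦ 0`, `E4 ↦ -O2-λO5`,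
`E5 ↦ (n+1-m)O2-λmO5`, `E6 ↦ 0`. -/
def De (m : ℕ) (lam : K) (n : ℕ) : (Fin 6 → K) →ₗ[K] (Fin 6 → K) :=
  Matrix.mulVecLin
    !![0, -1, 0, 0, 0, 0;
       0, 0, 0, -1, (n : K) + 1 - (m : K), 0;
       0, 0, 0, 0, 0, 0;
       0, 0, 0, 0, 0, 0;
       -((n : K) + 1), 0, 0, -lam, -(lam * (m : K)), 0;
       0, lam - (n : K) - 1, 0, 0, 0, 0]

/-- The odd part of the coboundary operator `D(n)` of `d_λ`, for `n ≥ 0`: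
`O1 ↦ (λ+m-n)E6`, `O2 ↦ 0`, `O3 ↦ (λ+n+2)E3`, `O4 ↦ -λE1+(n+2)E4+E5`,
`O5 ↦ 0`, `O6 ↦ E6`. -/
def Do (m : ℕ) (lam : K) (n : ℕ) : (Fin 6 → K) →ₗ[K] (Fin 6 → K) :=
  Matrix.mulVecLin
    !![0, 0, 0, -lam, 0, 0;
       0, 0, 0, 0, 0, 0;
       0, 0, lam + (n : K) + 2, 0, 0, 0;
       0, 0, 0, (n : K) + 2, 0, 0;
       0, 0, 0, 1, 0, 0;
       lam + (m : K) - (n : K), 0, 0, 0, 0, 1]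

/-- The even part of `D(-1)` of `d_λ` (on degree-1 cochains):
`E1 ↦ 0`, `E2 ↦ -O1+λO6`, `E3 ↦ 0`, `E4 ↦ -O2-λO5`, `E5 ↦ -mO2-λmO5`. -/
def DeNeg1 (m : ℕ) (lam : K) : (Fin 5 → K) →ₗ[K] (Fin 6 → K) :=
  Matrix.mulVecLin
    !![0, -1, 0, 0, 0;
       0, 0, 0, -1, -(m : K);
       0, 0, 0, 0, 0;
       0, 0, 0, 0, 0;
       0, 0, 0, -lam, -(lam * (m : K));
       0, lam, 0, 0, 0]

/-- The odd part of `D(-1)` of `d_λ` (on degree-1 cochains):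
`O1 ↦ (λ+m+1)E6`, `O2 ↦ 0`, `O3 ↦ (λ+1)E3`, `O4 ↦ -λE1+E4+E5`. -/
def DoNeg1 (m : ℕ) (lam : K) : (Fin 4 → K) →ₗ[K] (Fin 6 → K) :=
  Matrix.mulVecLin
    !![0, 0, 0, -lam;
       0, 0, 0, 0;
       0, 0, lam + 1, 0;
       0, 0, 0, 1;
       0, 0, 0, 1;
       lam + (m : K) + 1, 0, 0, 0]

omit [CharZero K] in
theorem mem_ker_DeNeg1 {m : ℕ} {lam : K} {x : Fin 5 → K} :
    x ∈ LinearMap.ker (DeNeg1 m lam) ↔ x 1 = 0 ∧ x 3 = -((m : K) * x 4) := by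
  rw [LinearMap.mem_ker, DeNeg1, Matrix.mulVecLin_apply, funext_iff]
  simp [Fin.forall_fin_succ, Matrix.mulVec, dotProduct, Fin.sum_univ_succ]
  grind

omit [CharZero K] in
theorem mem_ker_DoNeg1 {m : ℕ} {lam : K} {x : Fin 4 → K} :
    x ∈ LinearMap.ker (DoNeg1 m lam) ↔
      (lam = -((m : K) + 1) ∨ x 0 = 0) ∧ (lam = -1 ∨ x 2 = 0) ∧ x 3 = 0 := by
  rw [LinearMap.mem_ker, DoNeg1, Matrix.mulVecLin_apply, funext_iff]
  simp [Fin.forall_fin_succ, Matrix.mulVec, dotProduct, Fin.sum_univ_succ]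
  grind

omit [CharZero K] in
theorem ker_DeNeg1 (m : ℕ) (lam : K) :
    LinearMap.ker (DeNeg1 m lam) =
      Submodule.span K {(![1, 0, 0, 0, 0] : Fin 5 → K),
        ![0, 0, 1, 0, 0], ![0, 0, 0, (m : K), -1]} := by
  ext x
  rw [mem_ker_DeNeg1, Submodule.mem_span_triple]
  constructor
  · rintro ⟨h1, h3⟩
    refine ⟨x 0, x 2, -x 4, ?_⟩
    ext i
    fin_cases i <;> simp [h1, h3, mul_comm]
  · rintro ⟨a, b, c, rfl⟩
    simp [mul_comm]

omit [CharZero K] in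
theorem finrank_ker_DeNeg1 (m : ℕ) (lam : K) :
    Module.finrank K (LinearMap.ker (DeNeg1 m lam)) = 3 := by
  have hli : LinearIndependent K
      ![(![1, 0, 0, 0, 0] : Fin 5 → K), ![0, 0, 1, 0, 0], ![0, 0, 0, (m : K), -1]] := by
    rw [Fintype.linearIndependent_iff]
    intro g hg
    have h0 := congrFun hg 0
    have h2 := congrFun hg 2
    have h4 := congrFun hg 4
    simp [Fin.sum_univ_succ] at h0 h2 h4
    simp [Fin.forall_fin_succ, h0, h2, h4]
  have hrange : ({![1, 0, 0, 0, 0], ![0, 0, 1, 0, 0], ![0, 0, 0, (m : K), -1]} :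
      Set (Fin 5 → K)) =
      Set.range ![![1, 0, 0, 0, 0], ![0, 0, 1, 0, 0], ![0, 0, 0, (m : K), -1]] := by
    ext x
    simp only [Set.mem_insert_iff, Set.mem_singleton_iff, Set.mem_range, Fin.exists_fin_succ,
      eq_comm (b := x)]
    simp
  rw [ker_DeNeg1, hrange, finrank_span_eq_card hli, Fintype.card_fin]

omit [CharZero K] in
theorem ker_DoNeg1 (m : ℕ) (lam : K) :
    LinearMap.ker (DoNeg1 m lam) =
      Submodule.span K ({(![0, 1, 0, 0] : Fin 4 → K)} ∪
        {x : Fin 4 → K | lam = -((m : K) + 1) ∧ x = ![1, 0, 0, 0]} ∪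
        {x : Fin 4 → K | lam = -1 ∧ x = ![0, 0, 1, 0]}) := by
  apply le_antisymm
  · intro x hx
    obtain ⟨h0, h2, h3⟩ := mem_ker_DoNeg1.1 hx
    have hx : x = x 1 • ![0, 1, 0, 0] + x 0 • ![1, 0, 0, 0] + x 2 • ![0, 0, 1, 0] := by
      ext i
      fin_cases i <;> simp [h3]
    rw [hx]
    refine add_mem (add_mem ?_ ?_) ?_
    · exact Submodule.smul_mem _ _ (Submodule.subset_span (by simp))
    · rcases h0 with h | h
      · exact Submodule.smul_mem _ _ (Submodule.subset_span (.inl (.inr ⟨h, rfl⟩)))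
      · simp [h]
    · rcases h2 with h | h
      · exact Submodule.smul_mem _ _ (Submodule.subset_span (.inr ⟨h, rfl⟩))
      · simp [h]
  · rw [Submodule.span_le]
    rintro x ((rfl | ⟨rfl, rfl⟩) | ⟨rfl, rfl⟩) <;> rw [SetLike.mem_coe, mem_ker_DoNeg1] <;> simp

omit [CharZero K] in
theorem finrank_ker_DoNeg1 {m : ℕ} {lam : K} (hm : lam ≠ -((m : K) + 1)) (h1 : lam ≠ -1) :
    Module.finrank K (LinearMap.ker (DoNeg1 m lam)) = 1 := by
  have hker : LinearMap.ker (DoNeg1 m lam) = Submodule.span K {![0, 1, 0, 0]} := by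
    rw [ker_DoNeg1]
    congr 1
    ext x
    simp only [hm, h1, Set.mem_union, Set.mem_ofPred_eq, false_and, or_false]
  rw [hker]
  exact finrank_span_singleton fun h => by simpa using congrFun h 1

/-- For every `λ ∈ K`: the kernel of the even part of `D(-1)` is 3-dimensional,
spanned by `E1`, `E3` and `mE4 - E5`; the kernel of the odd part of `D(-1)` is
spanned by `O2`, together with `O1` exactly when `λ = -(m+1)` and together with
`O3` exactly when `λ = -1`. In particular, if `λ` is not a negative integer then
`H¹(d_λ)` has dimension `3` in the even part and `1` in the odd part. -/
theorem dLam_H1 (m : ℕ) (lam : K) :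
    (LinearMap.ker (DeNeg1 m lam) =
        Submodule.span K {(![1, 0, 0, 0, 0] : Fin 5 → K),
          ![0, 0, 1, 0, 0], ![0, 0, 0, (m : K), -1]} ∧
      Module.finrank K (LinearMap.ker (DeNeg1 m lam)) = 3) ∧
    (LinearMap.ker (DoNeg1 m lam) =
      Submodule.span K ({(![0, 1, 0, 0] : Fin 4 → K)} ∪
        {x : Fin 4 → K | lam = -((m : K) + 1) ∧ x = ![1, 0, 0, 0]} ∪
        {x : Fin 4 → K | lam = -1 ∧ x = ![0, 0, 1, 0]})) ∧
    ((∀ p : ℕ, 0 < p → lam ≠ -(p : K)) →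
      Module.finrank K (LinearMap.ker (DeNeg1 m lam)) = 3 ∧
      Module.finrank K (LinearMap.ker (DoNeg1 m lam)) = 1) := by
  refine ⟨⟨ker_DeNeg1 m lam, finrank_ker_DeNeg1 m lam⟩, ker_DoNeg1 m lam, fun h =>
    ⟨finrank_ker_DeNeg1 m lam, finrank_ker_DoNeg1 ?_ ?_⟩⟩
  · exact_mod_cast h (m + 1) m.succ_pos
  · exact_mod_cast h 1 one_pos

end LinfCohomology
end

section
/- For every integer n > m, the kernel of D(n) equals the image of D(n−m−1) on both the even and the odd parts, so H^{n+2}(d_*) = 0 for all n > m. For n = m: the image under D(−1) of the odd part of C(−1) is spanned by (m+2)E1 + E5 and E3 and has codimension 1 in the kernel of the even part of D(m), with complement spanned by E4; and the image under D(−1) of the even part of C(−1) is spanned by O3 and O4 and has codimension 1 in the kernel of the odd part of D(m), with complement spanned by O2 − (m+2)O5. That is, H^{m+2}(d_*) has dimension 1|1, with representatives φ^{0,1,m+1}_2 and ψ^{0,1,m+1}_3 − (m+2)ψ^{1,1,m}_1. -/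
namespace LinfCohomology

/- Cochain conventions: for `n ≥ 0`, the even part of `C(n)` has coordinates
`E1,…,E6` (for `φ^{1,0,n+1}_1, φ^{1,0,n+1}_2, φ^{0,1,n+1}_1, φ^{0,1,n+1}_2,
φ^{0,0,n+2}_3, φ^{1,1,n}_3`) and the odd part has coordinates `O1,…,O6` (for
`ψ^{1,0,n+1}_3, ψ^{0,1,n+1}_3, ψ^{0,0,n+2}_1, ψ^{0,0,n+2}_2, ψ^{1,1,n}_1,
ψ^{1,1,n}_2`); `C(-1)` has even coordinates `E1,…,E5` and odd `O1,…,O4`. -/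

/-- The even part of the coboundary operator `D(n)` of `d_* = ψ^{0,0,m+2}_1`, for
`n ≥ 0`: `E1 ↦ O3`, `E2 ↦ O4`, `E3 ↦ 0`, `E4 ↦ 0`, `E5 ↦ -(m+2)O3`,
`E6 ↦ O2-(m+2)O5`. -/
def DeStar (K : Type*) [Field K] (m : ℕ) (_n : ℕ) :
    (Fin 6 → K) →ₗ[K] (Fin 6 → K) :=
  Matrix.mulVecLin
    !![0, 0, 0, 0, 0, 0;
       0, 0, 0, 0, 0, 1;
       1, 0, 0, 0, -((m : K) + 2), 0;
       0, 1, 0, 0, 0, 0;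
       0, 0, 0, 0, 0, -((m : K) + 2);
       0, 0, 0, 0, 0, 0]

/-- The odd part of the coboundary operator `D(n)` of `d_*`, for `n ≥ 0`:
`O1 ↦ (m+2)E1+E5`, `O2 ↦ (m+2)E3`, `O3 ↦ 0`, `O4 ↦ 0`, `O5 ↦ E3`, `O6 ↦ E4`. -/
def DoStar (K : Type*) [Field K] (m : ℕ) (_n : ℕ) :
    (Fin 6 → K) →ₗ[K] (Fin 6 → K) :=
  Matrix.mulVecLin
    !![(m : K) + 2, 0, 0, 0, 0, 0;
       0, 0, 0, 0, 0, 0;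
       0, (m : K) + 2, 0, 0, 1, 0;
       0, 0, 0, 0, 0, 1;
       1, 0, 0, 0, 0, 0;
       0, 0, 0, 0, 0, 0]

/-- The even part of `D(-1)` of `d_*`: `E1 ↦ O3`, `E2 ↦ O4`, `E5 ↦ -(m+2)O3`. -/
def DeStarNeg1 (K : Type*) [Field K] (m : ℕ) : (Fin 5 → K) →ₗ[K] (Fin 6 → K) :=
  Matrix.mulVecLin
    !![0, 0, 0, 0, 0;
       0, 0, 0, 0, 0;
       1, 0, 0, 0, -((m : K) + 2);
       0, 1, 0, 0, 0;
       0, 0, 0, 0, 0;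
       0, 0, 0, 0, 0]

/-- The odd part of `D(-1)` of `d_*`: `O1 ↦ (m+2)E1+E5`, `O2 ↦ (m+2)E3`. -/
def DoStarNeg1 (K : Type*) [Field K] (m : ℕ) : (Fin 4 → K) →ₗ[K] (Fin 6 → K) :=
  Matrix.mulVecLin
    !![(m : K) + 2, 0, 0, 0;
       0, 0, 0, 0;
       0, (m : K) + 2, 0, 0;
       0, 0, 0, 0;
       1, 0, 0, 0;
       0, 0, 0, 0]

theorem mem_ker_DeStar {K : Type*} [Field K] {m n : ℕ} {x : Fin 6 → K} :
    x ∈ LinearMap.ker (DeStar K m n) ↔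
      x 0 = ((m : K) + 2) * x 4 ∧ x 1 = 0 ∧ x 5 = 0 := by
  simp only [LinearMap.mem_ker, DeStar, funext_iff, Fin.forall_fin_succ]
  simp [Matrix.mulVec, dotProduct, Fin.sum_univ_succ]
  grind

theorem mem_ker_DoStar {K : Type*} [Field K] {m n : ℕ} {x : Fin 6 → K} :
    x ∈ LinearMap.ker (DoStar K m n) ↔
      x 0 = 0 ∧ x 4 = -((m : K) + 2) * x 1 ∧ x 5 = 0 := by
  simp only [LinearMap.mem_ker, DoStar, funext_iff, Fin.forall_fin_succ]
  simp [Matrix.mulVec, dotProduct, Fin.sum_univ_succ]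
  grind

theorem mem_range_DoStar {K : Type*} [Field K] {m n : ℕ} {x : Fin 6 → K} :
    x ∈ LinearMap.range (DoStar K m n) ↔
      x 0 = ((m : K) + 2) * x 4 ∧ x 1 = 0 ∧ x 5 = 0 := by
  simp only [LinearMap.mem_range, DoStar, funext_iff, Fin.forall_fin_succ]
  simp [Matrix.mulVec, dotProduct, Fin.sum_univ_succ]
  refine ⟨by grind, fun h => ⟨![x 4, 0, 0, 0, x 2, x 3], ?_⟩⟩
  simp
  grind

theorem mem_range_DeStar {K : Type*} [Field K] {m n : ℕ} {x : Fin 6 → K} :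
    x ∈ LinearMap.range (DeStar K m n) ↔
      x 0 = 0 ∧ x 4 = -((m : K) + 2) * x 1 ∧ x 5 = 0 := by
  simp only [LinearMap.mem_range, DeStar, funext_iff, Fin.forall_fin_succ]
  constructor
  · rintro ⟨y, h⟩
    simp [Matrix.mulVec, dotProduct, Fin.sum_univ_succ] at h
    grind
  · refine fun h => ⟨![x 2, x 3, 0, 0, 0, x 1], ?_⟩
    simp [Matrix.mulVec, dotProduct, Fin.sum_univ_succ]
    grind

theorem mem_range_DoStarNeg1 {K : Type*} [Field K] [CharZero K] {m : ℕ} {x : Fin 6 → K} :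
    x ∈ LinearMap.range (DoStarNeg1 K m) ↔
      x 0 = ((m : K) + 2) * x 4 ∧ x 1 = 0 ∧ x 3 = 0 ∧ x 5 = 0 := by
  have hm : (m : K) + 2 ≠ 0 := by exact_mod_cast (by omega : m + 2 ≠ 0)
  simp only [LinearMap.mem_range, DoStarNeg1, funext_iff, Fin.forall_fin_succ]
  simp [Matrix.mulVec, dotProduct, Fin.sum_univ_succ]
  refine ⟨by grind, fun h => ⟨![x 4, x 2 / ((m : K) + 2), 0, 0], ?_⟩⟩
  simp [mul_div_cancel₀, hm]
  grind

theorem mem_range_DeStarNeg1 {K : Type*} [Field K] {m : ℕ} {x : Fin 6 → K} :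
    x ∈ LinearMap.range (DeStarNeg1 K m) ↔
      x 0 = 0 ∧ x 1 = 0 ∧ x 4 = 0 ∧ x 5 = 0 := by
  simp only [LinearMap.mem_range, DeStarNeg1, funext_iff, Fin.forall_fin_succ]
  constructor
  · rintro ⟨y, h⟩
    simp [Matrix.mulVec, dotProduct, Fin.sum_univ_succ] at h
    grind
  · refine fun h => ⟨![x 2, x 3, 0, 0, 0], ?_⟩
    simp [Matrix.mulVec, dotProduct, Fin.sum_univ_succ]
    grind

/-- For `d_*`: for every `n > m` the kernel of `D(n)` equals the image of
`D(n-m-1)` on both parities, so `H^{n+2}(d_*) = 0` for `n > m`. For `n = m`: the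
image under `D(-1)` of the odd part of `C(-1)` is spanned by `(m+2)E1+E5` and
`E3`, of codimension 1 in the kernel of the even part of `D(m)` with complement
spanned by `E4`; and the image under `D(-1)` of the even part of `C(-1)` is
spanned by `O3` and `O4`, of codimension 1 in the kernel of the odd part of
`D(m)` with complement spanned by `O2-(m+2)O5`. That is, `H^{m+2}(d_*)` has
dimension `1|1`, with representatives `φ^{0,1,m+1}_2` and
`ψ^{0,1,m+1}_3-(m+2)ψ^{1,1,m}_1`. -/
theorem dStar_cohomology (K : Type*) [Field K] [CharZero K] (m : ℕ) :
    (∀ n : ℕ, m < n →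
      LinearMap.ker (DeStar K m n) = LinearMap.range (DoStar K m (n - m - 1)) ∧
      LinearMap.ker (DoStar K m n) = LinearMap.range (DeStar K m (n - m - 1))) ∧
    (LinearMap.range (DoStarNeg1 K m) =
      Submodule.span K {(![(m : K) + 2, 0, 0, 0, 1, 0] : Fin 6 → K),
        ![0, 0, 1, 0, 0, 0]}) ∧
    (LinearMap.ker (DeStar K m m) =
      LinearMap.range (DoStarNeg1 K m) ⊔
        Submodule.span K {(![0, 0, 0, 1, 0, 0] : Fin 6 → K)}) ∧
    ((![0, 0, 0, 1, 0, 0] : Fin 6 → K) ∉ LinearMap.range (DoStarNeg1 K m)) ∧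
    (LinearMap.range (DeStarNeg1 K m) =
      Submodule.span K {(![0, 0, 1, 0, 0, 0] : Fin 6 → K),
        ![0, 0, 0, 1, 0, 0]}) ∧
    (LinearMap.ker (DoStar K m m) =
      LinearMap.range (DeStarNeg1 K m) ⊔
        Submodule.span K {(![0, 1, 0, 0, -((m : K) + 2), 0] : Fin 6 → K)}) ∧
    ((![0, 1, 0, 0, -((m : K) + 2), 0] : Fin 6 → K) ∉
      LinearMap.range (DeStarNeg1 K m)) := by
  refine ⟨fun n _ => ⟨?_, ?_⟩, ?_, ?_, ?_, ?_, ?_, ?_⟩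
  · ext x
    rw [mem_ker_DeStar, mem_range_DoStar]
  · ext x
    rw [mem_ker_DoStar, mem_range_DeStar]
  · ext x
    rw [mem_range_DoStarNeg1, Submodule.mem_span_pair]
    constructor
    · intro h
      refine ⟨x 4, x 2, ?_⟩
      simp [funext_iff, Fin.forall_fin_succ]
      grind
    · rintro ⟨a, b, rfl⟩
      simp [mul_comm]
  · ext x
    rw [mem_ker_DeStar, Submodule.mem_sup]
    simp only [Submodule.mem_span_singleton, mem_range_DoStarNeg1]
    constructor
    · intro h
      refine ⟨![x 0, 0, x 2, 0, x 4, 0], by simpa using h.1, _, ⟨x 3, rfl⟩, ?_⟩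
      simp [funext_iff, Fin.forall_fin_succ]
      grind
    · rintro ⟨y, hy, _, ⟨a, rfl⟩, rfl⟩
      simp
      grind
  · rw [mem_range_DoStarNeg1]
    simp
  · ext x
    rw [mem_range_DeStarNeg1, Submodule.mem_span_pair]
    constructor
    · intro h
      refine ⟨x 2, x 3, ?_⟩
      simp [funext_iff, Fin.forall_fin_succ]
      grind
    · rintro ⟨a, b, rfl⟩
      simp
  · ext x
    rw [mem_ker_DoStar, Submodule.mem_sup]
    simp only [Submodule.mem_span_singleton, mem_range_DeStarNeg1]
    constructor
    · intro h
      refine ⟨![0, 0, x 2, x 3, 0, 0], by simp, _, ⟨x 1, rfl⟩, ?_⟩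
      simp [funext_iff, Fin.forall_fin_succ]
      grind
    · rintro ⟨y, hy, _, ⟨a, rfl⟩, rfl⟩
      simp
      grind
  · rw [mem_range_DeStarNeg1]
    simp

end LinfCohomology
end
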